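/- Let (Ω,ℱ,P) be a probability space and X=(X_t)_{t∈[0,T]} a real-valued measurable stochastic process with continuous paths, extended by X_t := X_0 for t<0 and X_t := X_T for t>T. Assume X has finite quadratic variation: there exists a process [X]=([X]_t)_{t∈[0,T]} whose paths are continuous, nondecreasing and vanish at t=0, such that for every t∈[0,T] the random variables (1/ε)∫_0^t (X_{s+ε}−X_s)^2 ds converge in probability to [X]_t as ε→0⁺. Let F∈C^{1,2}([0,T]×ℝ;ℝ). Then for every t∈[0,T] the random variables ∫_0^t ∂_x F(s,X_s)(X_{s+ε}−X_s)/ε ds converge in probability, as ε→0⁺, to F(t,X_t) − F(0,X_0) − ∫_0^t ∂_t F(s,X_s) ds − (1/2)∫_0^t ∂^2_{xx}F(s,X_s) d[X]_s, where the last integral is the pathwise Lebesgue–Stieltjes integral with respect to the continuous nondecreasing function s↦[X]_s(ω). Consequently, P-a.s., F(t,X_t) = F(0,X_0) + ∫_0^t ∂_t F(s,X_s) ds + ∫_0^t ∂_x F(s,X_s) d⁻X_s + (1/2)∫_0^t ∂^2_{xx}F(s,X_s) d[X]_s for all t∈[0,T]. -/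

import Mathlib

open MeasureTheory Filter Topology Set

/-!
The formula is a second-order Taylor expansion integrated in time. For a fixed path `x`, put
`Δ = x (s + ε) - x s`. The increment `F (s + ε) (x (s + ε)) - F s (x s)`, divided by `ε` and
integrated over `[0, t]`, tends to `F t (x t) - F 0 (x 0)` (`tendsto_average_increment`). It also
splits into four parts:

* a time increment at the frozen position `x (s + ε)`, contributing `∫ ∂ₜF ds`
  (`tendsto_time_increment`, by dominated convergence);
* `∂ₓF Δ / ε`, the forward sum under study;
* `½ ∂²ₓₓF Δ² / ε`, contributing `½ ∫ ∂²ₓₓF d[X]` (`tendsto_weighted_quadratic_sum`): the measures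
  `Δ² / ε ds` have masses on the intervals `]t i / N, t (i + 1) / N]` converging to those of `d[X]`,
  hence they converge weakly against continuous functions;
* a Taylor remainder at most `η Δ² / ε` for arbitrarily small `η`, because `∂²ₓₓF` is uniformly
  continuous on compact sets (`taylor_remainder_uniform`); its integral vanishes since
  `∫ Δ² / ε ds` stays bounded.

This gives the deterministic statement `pathwise_ito`. Only countably many times `t i / N` enter it,
so along any sequence `ε → 0⁺` a single subsequence makes the quadratic variation converge at all
of them almost surely (`exists_common_subseq_tendsto_ae`). Since every sequence has a subsequence
along which the forward sums converge almost surely to the same limit, they converge in probability.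

For the almost sure identity, uniqueness of limits in probability gives equality at each time of a
countable dense subset of `[0, T]`, and both sides are continuous in time; for the Stieltjes
integral this is `continuousOn_stieltjes_integral`.
-/

/-! ### Extraction of a common subsequence -/

/-- Countably many sequences converging in measure have one common subsequence along which all of
them converge almost surely. The `k`-th index is chosen so that the first `k + 1` sequences are
all within `2⁻ᵏ` of their limits off a set of measure `2⁻ᵏ`; Borel–Cantelli then applies. -/
theorem exists_common_subseq_tendsto_ae {Ω : Type*} [MeasurableSpace Ω] {P : Measure Ω}
    {f : ℕ → ℕ → Ω → ℝ} {g : ℕ → Ω → ℝ}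
    (h : ∀ j, TendstoInMeasure P (f j) atTop (g j)) :
    ∃ φ : ℕ → ℕ, StrictMono φ ∧
      ∀ᵐ ω ∂P, ∀ j, Tendsto (fun n => f j (φ n) ω) atTop (𝓝 (g j ω)) := by
  have h1 : ∀ k : ℕ, ∀ᶠ n in atTop,
      P (⋃ j ∈ Finset.range (k + 1), {ω | (1 / 2 : ℝ) ^ k ≤ dist (f j n ω) (g j ω)})
        ≤ (1 / 2 : ENNReal) ^ k := by
    intro k
    have h2 : Tendsto (fun n => ∑ j ∈ Finset.range (k + 1),
        P {ω | (1 / 2 : ℝ) ^ k ≤ dist (f j n ω) (g j ω)}) atTop (𝓝 0) := by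
      have := tendsto_finsetSum (Finset.range (k + 1)) (fun j _ =>
        (tendstoInMeasure_iff_dist.1 (h j)) ((1 / 2 : ℝ) ^ k) (by positivity))
      simpa using this
    have h3 : (0 : ENNReal) < (1 / 2 : ENNReal) ^ k := by
      apply ENNReal.pow_pos; simp
    filter_upwards [h2.eventually (ge_mem_nhds h3)] with n hn
    exact (measure_biUnion_finset_le _ _).trans hn
  obtain ⟨φ, hφ, hφ'⟩ := extraction_forall_of_eventually h1
  refine ⟨φ, hφ, ?_⟩
  have h4 : (∑' k, P (⋃ j ∈ Finset.range (k + 1),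
      {ω | (1 / 2 : ℝ) ^ k ≤ dist (f j (φ k) ω) (g j ω)})) ≠ ⊤ := by
    refine ne_top_of_le_ne_top ?_ (ENNReal.tsum_le_tsum hφ')
    rw [ENNReal.tsum_geometric]
    simp
  filter_upwards [ae_eventually_notMem h4] with ω hω j
  rw [tendsto_iff_dist_tendsto_zero]
  refine squeeze_zero' (Eventually.of_forall fun _ => dist_nonneg) ?_
    (tendsto_pow_atTop_nhds_zero_of_lt_one (r := (1 / 2 : ℝ)) (by norm_num) (by norm_num))
  filter_upwards [hω, eventually_ge_atTop j] with k hk hjk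
  simp only [mem_iUnion, not_exists, Finset.mem_range, mem_ofPred_eq, not_le] at hk
  exact (hk j (by omega)).le

/-! ### Weak convergence from masses of intervals -/

/-- Error of a Riemann–Stieltjes sum over the uniform partition of `[0, t]` into `N` pieces: it is
at most the oscillation `η` of `g` on the pieces times the total mass. -/
theorem abs_integral_sub_sum_le {ν : Measure ℝ} {t η : ℝ} (ht : 0 ≤ t) {g : ℝ → ℝ}
    (hg : ContinuousOn g (Icc 0 t)) (hν : ν (Ioc 0 t) < ⊤) {N : ℕ} (hN : 0 < N)
    (hη : ∀ i < N, ∀ s ∈ Ioc (t * (i / N : ℝ)) (t * ((i + 1 : ℕ) / N : ℝ)),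
      |g s - g (t * (i / N : ℝ))| ≤ η) :
    |(∫ s in Ioc 0 t, g s ∂ν) - ∑ i ∈ Finset.range N, g (t * (i / N : ℝ)) *
        ν.real (Ioc (t * (i / N : ℝ)) (t * ((i + 1 : ℕ) / N : ℝ)))| ≤ η * ν.real (Ioc 0 t) := by
  set a : ℕ → ℝ := fun i => t * (i / N : ℝ) with ha
  have hN' : (0 : ℝ) < N := by exact_mod_cast hN
  have ha0 : a 0 = 0 := by simp [ha]
  have haN : a N = t := by simp [ha, hN'.ne']
  have hmono : Monotone a := by
    intro i j hij
    simp only [ha]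
    gcongr
  have hsub : ∀ i < N, Ioc (a i) (a (i + 1)) ⊆ Ioc 0 t := by
    intro i hi
    apply Ioc_subset_Ioc
    · rw [← ha0]; exact hmono (Nat.zero_le _)
    · conv_rhs => rw [← haN]
      exact hmono hi
  have hgi : IntegrableOn g (Ioc 0 t) ν := by
    obtain ⟨C, hC⟩ := isCompact_Icc.exists_bound_of_continuousOn hg
    refine IntegrableOn.of_bound hν
      ((hg.mono Ioc_subset_Icc_self).aestronglyMeasurable measurableSet_Ioc) C ?_
    filter_upwards [ae_restrict_mem measurableSet_Ioc] with s hs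
    exact hC s (Ioc_subset_Icc_self hs)
  have hone : IntegrableOn (fun _ => (1 : ℝ)) (Ioc 0 t) ν := by
    rw [integrableOn_const_iff]; exact Or.inr hν
  have hint : ∀ (f : ℝ → ℝ), IntegrableOn f (Ioc 0 t) ν →
      ∫ s in Ioc 0 t, f s ∂ν = ∑ i ∈ Finset.range N, ∫ s in Ioc (a i) (a (i + 1)), f s ∂ν := by
    intro f hf
    have := intervalIntegral.sum_integral_adjacent_intervals (f := f) (μ := ν) (a := a) (n := N)
      (fun k hk => by
        rw [intervalIntegrable_iff_integrableOn_Ioc_of_le (hmono (Nat.le_succ k))]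
        exact hf.mono_set (hsub k hk))
    rw [ha0, haN, intervalIntegral.integral_of_le ht] at this
    rw [← this]
    exact Finset.sum_congr rfl fun i _ =>
      intervalIntegral.integral_of_le (hmono (Nat.le_succ i))
  have hmass : ν.real (Ioc 0 t) = ∑ i ∈ Finset.range N, ν.real (Ioc (a i) (a (i + 1))) := by
    simpa using hint _ hone
  change |_ - ∑ i ∈ Finset.range N, g (a i) * ν.real (Ioc (a i) (a (i + 1)))| ≤ _
  rw [hint g hgi, hmass, ← Finset.sum_sub_distrib, Finset.mul_sum]
  refine (Finset.abs_sum_le_sum_abs _ _).trans (Finset.sum_le_sum fun i hi => ?_)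
  have hi' := Finset.mem_range.1 hi
  have hfin : ν (Ioc (a i) (a (i + 1))) < ⊤ := (measure_mono (hsub i hi')).trans_lt hν
  have : (∫ s in Ioc (a i) (a (i + 1)), g s ∂ν) - g (a i) * ν.real (Ioc (a i) (a (i + 1)))
      = ∫ s in Ioc (a i) (a (i + 1)), (g s - g (a i)) ∂ν := by
    rw [integral_sub (hgi.mono_set (hsub i hi')) (integrableOn_const hfin.ne)]
    simp [mul_comm]
  rw [this, ← Real.norm_eq_abs]
  exact norm_setIntegral_le_of_norm_le_const hfin (fun s hs => hη i hi' s hs)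

/-- If the masses of all intervals of all uniform partitions of `]0, t]` converge, then so do the
integrals of any function continuous on `[0, t]`. -/
theorem tendsto_integral_of_tendsto_measure_Ioc {ν : ℕ → Measure ℝ} {μ : Measure ℝ} {t : ℝ}
    (ht : 0 ≤ t) {g : ℝ → ℝ} (hg : ContinuousOn g (Icc 0 t))
    (hν : ∀ n, ν n (Ioc 0 t) < ⊤) (hμ : μ (Ioc 0 t) < ⊤)
    (h : ∀ N i : ℕ, i < N → Tendsto
      (fun n => (ν n).real (Ioc (t * (i / N : ℝ)) (t * ((i + 1 : ℕ) / N : ℝ)))) atTop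
      (𝓝 (μ.real (Ioc (t * (i / N : ℝ)) (t * ((i + 1 : ℕ) / N : ℝ)))))) :
    Tendsto (fun n => ∫ s in Ioc 0 t, g s ∂(ν n)) atTop (𝓝 (∫ s in Ioc 0 t, g s ∂μ)) := by
  have hmass : Tendsto (fun n => (ν n).real (Ioc 0 t)) atTop (𝓝 (μ.real (Ioc 0 t))) := by
    simpa using h 1 0 one_pos
  set m := μ.real (Ioc 0 t) with hm
  have hm0 : 0 ≤ m := measureReal_nonneg
  rw [Metric.tendsto_nhds]
  intro δ hδ
  set η := δ / (2 * (2 * m + 2)) with hη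
  have hη0 : 0 < η := by positivity
  have hηm : η * (2 * m + 2) = δ / 2 := by rw [hη]; field_simp
  obtain ⟨ρ, hρ, hρ'⟩ := Metric.uniformContinuousOn_iff.1
    (isCompact_Icc.uniformContinuousOn_of_continuous hg) η hη0
  -- a mesh `t / N` below the modulus of continuity
  obtain ⟨N, hN⟩ := exists_nat_gt (t / ρ)
  have hN0 : (0 : ℝ) < N := lt_of_le_of_lt (by positivity) hN
  have hosc : ∀ i < N, ∀ s ∈ Ioc (t * (i / N : ℝ)) (t * ((i + 1 : ℕ) / N : ℝ)),
      |g s - g (t * (i / N : ℝ))| ≤ η := by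
    intro i hi s hs
    have h0 : 0 ≤ t * (i / N : ℝ) := by positivity
    have h1 : t * ((i + 1 : ℕ) / N : ℝ) ≤ t := by
      apply mul_le_of_le_one_right ht
      rw [div_le_one hN0]; exact_mod_cast hi
    have h2 : t * ((i + 1 : ℕ) / N : ℝ) = t * (i / N : ℝ) + t / N := by
      push_cast; field_simp
    have h3 : t / N < ρ := by
      rw [div_lt_iff₀ hN0]; rw [div_lt_iff₀ hρ] at hN; linarith
    rw [← Real.dist_eq]
    refine (hρ' s ⟨h0.trans hs.1.le, hs.2.trans h1⟩ _ ⟨h0, hs.1.le.trans (hs.2.trans h1)⟩ ?_).le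
    rw [Real.dist_eq, abs_of_pos (by linarith [hs.1])]
    linarith [hs.2]
  have hsum : Tendsto (fun n => ∑ i ∈ Finset.range N, g (t * (i / N : ℝ)) *
        (ν n).real (Ioc (t * (i / N : ℝ)) (t * ((i + 1 : ℕ) / N : ℝ)))) atTop
      (𝓝 (∑ i ∈ Finset.range N, g (t * (i / N : ℝ)) *
        μ.real (Ioc (t * (i / N : ℝ)) (t * ((i + 1 : ℕ) / N : ℝ))))) :=
    tendsto_finsetSum _ fun i hi => (h N i (Finset.mem_range.1 hi)).const_mul _
  have hNn : 0 < N := by exact_mod_cast hN0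
  have hμ' := abs_integral_sub_sum_le ht hg hμ hNn hosc
  filter_upwards [Metric.tendsto_nhds.1 hsum (δ / 2) (by positivity),
    hmass.eventually (gt_mem_nhds (lt_add_one m))] with n hn1 hn2
  have hν' := abs_integral_sub_sum_le ht hg (hν n) hNn hosc
  have hν'' : η * (ν n).real (Ioc 0 t) ≤ η * (m + 1) := by gcongr
  rw [Real.dist_eq] at hn1 ⊢
  rw [← hm] at hμ'
  rw [abs_le] at hμ' hν'
  rw [abs_lt] at hn1 ⊢
  constructor <;> nlinarith [hμ'.1, hμ'.2, hν'.1, hν'.2, hn1.1, hn1.2]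

/-! ### Taylor estimates -/

/-- Mean value inequality for `z ↦ f z - c z`, on a segment with endpoints in either order. -/
theorem abs_sub_sub_mul_le {f f' : ℝ → ℝ} {a b c η : ℝ}
    (hf : ∀ z ∈ uIcc a b, HasDerivWithinAt f (f' z) (uIcc a b) z)
    (hη : ∀ z ∈ uIcc a b, |f' z - c| ≤ η) : |f b - f a - c * (b - a)| ≤ η * |b - a| := by
  have := (convex_uIcc a b).norm_image_sub_le_of_norm_hasDerivWithin_le
    (f := fun z => f z - c * z) (f' := fun z => f' z - c) (C := η)
    (fun z hz => by
      have := (hf z hz).sub (((hasDerivAt_id z).const_mul c).hasDerivWithinAt)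
      rw [mul_one] at this
      exact this)
    hη left_mem_uIcc right_mem_uIcc
  simp only [Real.norm_eq_abs] at this
  convert this using 2
  ring

/-- Second-order Taylor estimate with the second derivative replaced by a constant `c` that it
stays `η`-close to. The constant in front of `(b - a) ^ 2` is not optimal: applying the mean value
inequality twice loses a factor `2`. -/
theorem abs_taylor_two_le {f f1 f2 : ℝ → ℝ} {a b c η : ℝ}
    (hf : ∀ z, HasDerivAt f (f1 z) z) (hf1 : ∀ z, HasDerivAt f1 (f2 z) z)
    (hη : ∀ z ∈ uIcc a b, |f2 z - c| ≤ η) :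
    |f b - f a - f1 a * (b - a) - 1 / 2 * (c * (b - a) ^ 2)| ≤ η * (b - a) ^ 2 := by
  have hη0 : 0 ≤ η := (abs_nonneg _).trans (hη a left_mem_uIcc)
  have h1 : ∀ z ∈ uIcc a b, |f1 z - f1 a - c * (z - a)| ≤ η * |b - a| := by
    intro z hz
    have hsub : uIcc a z ⊆ uIcc a b := uIcc_subset_uIcc left_mem_uIcc hz
    refine (abs_sub_sub_mul_le (fun w _ => (hf1 w).hasDerivWithinAt)
      (fun w hw => hη w (hsub hw))).trans ?_
    gcongr 1
    exact abs_sub_left_of_mem_uIcc hz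
  have h2 := abs_sub_sub_mul_le (f := fun z => f z - 1 / 2 * (c * (z - a) ^ 2))
    (f' := fun z => f1 z - c * (z - a)) (a := a) (b := b) (c := f1 a) (η := η * |b - a|)
    (fun z _ => by
      have := (hf z).sub ((((((hasDerivAt_id z).sub_const a).pow 2)).const_mul c).const_mul (1 / 2))
      refine HasDerivAt.hasDerivWithinAt ?_
      have he : c * (z - a) = 1 / 2 * (c * (((2 : ℕ) : ℝ) * (z - a) ^ (2 - 1) * 1)) := by
        push_cast; ring
      rw [he]
      exact this)
    (fun z hz => by
      have := h1 z hz
      rwa [sub_right_comm] at this)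
  rw [mul_assoc, ← abs_mul, abs_mul_self, ← sq] at h2
  convert h2 using 2
  ring

/-! ### Time averages along a path -/

/-- The averaged increment telescopes to
`ε⁻¹ (∫ₜ^{t+ε} G - ∫₀^ε G)`, a difference of two slopes of the primitive of `G`. -/
theorem tendsto_average_increment {G : ℝ → ℝ} (hG : Continuous G) (t : ℝ) :
    Tendsto (fun ε : ℝ => ∫ s in (0 : ℝ)..t, (G (s + ε) - G s) / ε) (𝓝[>] 0)
      (𝓝 (G t - G 0)) := by
  have hd : ∀ r, HasDerivAt (fun u => ∫ s in (0 : ℝ)..u, G s) (G r) r := fun r =>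
    intervalIntegral.integral_hasDerivAt_right (hG.intervalIntegrable _ _)
      (hG.stronglyMeasurableAtFilter _ _) hG.continuousAt
  have := (hd t).tendsto_slope_zero_right.sub (hd 0).tendsto_slope_zero_right
  refine this.congr fun ε => ?_
  have hi : ∀ a b, IntervalIntegrable G volume a b := fun a b => hG.intervalIntegrable a b
  have h1 : ∫ s in (0 : ℝ)..t, (G (s + ε) - G s) / ε
      = ((∫ s in (0 + ε)..(t + ε), G s) - ∫ s in (0 : ℝ)..t, G s) / ε := by
    rw [intervalIntegral.integral_div, intervalIntegral.integral_sub
      ((by fun_prop : Continuous fun s => G (s + ε)).intervalIntegrable _ _) (hi _ _),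
      intervalIntegral.integral_comp_add_right]
  rw [h1, ← intervalIntegral.integral_interval_sub_left (hi 0 (t + ε)) (hi 0 (0 + ε))]
  simp only [smul_eq_mul, intervalIntegral.integral_same]
  ring

theorem continuousOn_comp_path {H : ℝ → ℝ → ℝ} {T : ℝ}
    (hH : ContinuousOn (fun p : ℝ × ℝ => H p.1 p.2) (Icc 0 T ×ˢ univ)) {a b : ℝ → ℝ} {S : Set ℝ}
    (ha : ContinuousOn a S) (hb : ContinuousOn b S) (hS : ∀ s ∈ S, a s ∈ Icc 0 T) :
    ContinuousOn (fun s => H (a s) (b s)) S :=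
  hH.comp (f := fun s => (a s, b s)) (ha.prodMk hb) fun s hs => ⟨hS s hs, mem_univ _⟩

/-- The time increment of `F` at the frozen position `x (s + ε)` averages to `∫ ∂ₜF`. The time
`s + ε` is clamped to `[0, T]`, outside of which `F` carries no information; pointwise convergence
of the integrand can therefore only fail at `s = T`. -/
theorem tendsto_time_increment {T t : ℝ} (ht : t ∈ Icc 0 T) {x : ℝ → ℝ} (hx : Continuous x)
    {F Ft : ℝ → ℝ → ℝ}
    (hF : ContinuousOn (fun p : ℝ × ℝ => F p.1 p.2) (Icc 0 T ×ˢ univ))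
    (hFt : ∀ y : ℝ, ∀ r ∈ Icc 0 T, HasDerivWithinAt (fun r => F r y) (Ft r y) (Icc 0 T) r)
    (hFtc : ContinuousOn (fun p : ℝ × ℝ => Ft p.1 p.2) (Icc 0 T ×ˢ univ)) :
    Tendsto (fun ε : ℝ => ∫ s in (0 : ℝ)..t,
        (F (max 0 (min T (s + ε))) (x (s + ε)) - F s (x (s + ε))) / ε) (𝓝[>] 0)
      (𝓝 (∫ s in (0 : ℝ)..t, Ft s (x s))) := by
  have hsmall : ∀ᶠ ε : ℝ in 𝓝[>] 0, 0 < ε ∧ ε < 1 :=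
    (eventually_mem_nhdsWithin).and (mem_nhdsWithin_of_mem_nhds (Iio_mem_nhds one_pos))
  obtain ⟨M, hM⟩ := isCompact_Icc.exists_bound_of_continuousOn
    (s := Icc 0 (T + 1)) hx.continuousOn
  obtain ⟨C, hC⟩ := (isCompact_Icc.prod isCompact_Icc).exists_bound_of_continuousOn
    (s := Icc 0 T ×ˢ Icc (-M) M) (hFtc.mono (prod_mono_right (subset_univ _)))
  have hclamp : ∀ r : ℝ, max 0 (min T r) ∈ Icc 0 T := fun r =>
    ⟨le_max_left _ _, max_le (ht.1.trans ht.2) (min_le_left _ _)⟩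
  have hmvt : ∀ s ∈ Icc 0 t, ∀ ε : ℝ, 0 < ε → ∀ y c η : ℝ,
      (∀ z ∈ Icc s (min T (s + ε)), |Ft z y - c| ≤ η) →
      |F (max 0 (min T (s + ε))) y - F s y - c * (min T (s + ε) - s)|
        ≤ η * |min T (s + ε) - s| := by
    intro s hs ε hε y c η hη
    have h1 : s ≤ min T (s + ε) := le_min (hs.2.trans ht.2) (by linarith)
    rw [max_eq_right (hs.1.trans h1)]
    refine abs_sub_sub_mul_le (f := fun r => F r y) (f' := fun r => Ft r y) ?_ ?_
    · rw [uIcc_of_le h1]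
      intro z hz
      have hsub : Icc s (min T (s + ε)) ⊆ Icc 0 T := Icc_subset_Icc hs.1 (min_le_left _ _)
      exact (hFt y z (hsub hz)).mono hsub
    · rwa [uIcc_of_le h1]
  refine intervalIntegral.tendsto_integral_filter_of_dominated_convergence (fun _ => C) ?_ ?_
    (by simp) ?_
  · filter_upwards with ε
    rw [uIoc_of_le ht.1]
    refine ContinuousOn.aestronglyMeasurable ?_ measurableSet_Ioc
    refine ContinuousOn.div_const (ContinuousOn.sub ?_ ?_) _
    · exact continuousOn_comp_path hF (by fun_prop) (by fun_prop) fun s _ => hclamp _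
    · exact continuousOn_comp_path hF (by fun_prop) (by fun_prop) fun s hs =>
        ⟨hs.1.le, hs.2.trans ht.2⟩
  · filter_upwards [hsmall] with ε hε
    refine Eventually.of_forall fun s hs => ?_
    rw [uIoc_of_le ht.1] at hs
    have h1 : s ≤ min T (s + ε) := le_min (hs.2.trans ht.2) (by linarith [hε.1])
    have h2 : min T (s + ε) - s ≤ ε := by linarith [min_le_right T (s + ε)]
    have hy : x (s + ε) ∈ Icc (-M) M := by
      have := hM (s + ε) ⟨by linarith [hs.1, hε.1], by linarith [hs.2, ht.2, hε.2]⟩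
      exact abs_le.1 this
    have hCy : ∀ z ∈ Icc s (min T (s + ε)), |Ft z (x (s + ε)) - 0| ≤ C := fun z hz => by
      rw [sub_zero]
      exact hC (z, x (s + ε)) ⟨⟨hs.1.le.trans hz.1, hz.2.trans (min_le_left _ _)⟩, hy⟩
    have hC0 : 0 ≤ C := (abs_nonneg _).trans (hCy s ⟨le_rfl, h1⟩)
    have := hmvt s ⟨hs.1.le, hs.2⟩ ε hε.1 (x (s + ε)) 0 C hCy
    rw [abs_of_nonneg (by linarith : 0 ≤ min T (s + ε) - s), zero_mul, sub_zero] at this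
    rw [Real.norm_eq_abs, abs_div, abs_of_pos hε.1, div_le_iff₀ hε.1]
    exact this.trans (by gcongr)
  · have hae : ∀ᵐ s : ℝ, s ≠ t := by simp [ae_iff]
    filter_upwards [hae] with s hst hs
    rw [uIoc_of_le ht.1] at hs
    have hsT : s < T := (lt_of_le_of_ne hs.2 hst).trans_le ht.2
    rw [Metric.tendsto_nhds]
    intro η hη
    have hcw := hFtc (s, x s) ⟨⟨hs.1.le, hsT.le⟩, mem_univ _⟩
    obtain ⟨ρ, hρ, hρ'⟩ := Metric.continuousWithinAt_iff.1 hcw (η / 2) (by positivity)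
    have hxs : ∀ᶠ ε : ℝ in 𝓝[>] 0, dist (x (s + ε)) (x s) < ρ := by
      have : Tendsto (fun ε : ℝ => x (s + ε)) (𝓝 0) (𝓝 (x s)) := by
        have : Continuous fun ε : ℝ => x (s + ε) := by fun_prop
        simpa using this.tendsto 0
      exact (Metric.tendsto_nhds.1 (this.mono_left nhdsWithin_le_nhds)) ρ hρ
    filter_upwards [hsmall, hxs,
      mem_nhdsWithin_of_mem_nhds (Iio_mem_nhds hρ),
      mem_nhdsWithin_of_mem_nhds (Iio_mem_nhds (sub_pos.2 hsT))] with ε hε hxε hερ hεT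
    simp only [mem_Iio] at hερ hεT
    have hmin : min T (s + ε) = s + ε := min_eq_right (by linarith)
    have := hmvt s ⟨hs.1.le, hs.2⟩ ε hε.1 (x (s + ε)) (Ft s (x s)) (η / 2) (fun z hz => by
      rw [hmin] at hz
      have := hρ' (x := (z, x (s + ε)))
        ⟨⟨hs.1.le.trans hz.1, by linarith [hz.2]⟩, mem_univ _⟩ (by
          rw [Prod.dist_eq]
          refine max_lt ?_ hxε
          rw [Real.dist_eq, abs_of_nonneg (by linarith [hz.1])]
          linarith [hz.2])
      exact this.le)
    rw [hmin] at this
    rw [hmin, Real.dist_eq]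
    have he : (F (max 0 (s + ε)) (x (s + ε)) - F s (x (s + ε))) / ε - Ft s (x s)
        = (F (max 0 (s + ε)) (x (s + ε)) - F s (x (s + ε)) - Ft s (x s) * (s + ε - s)) / ε := by
      have := hε.1.ne'
      field_simp
      ring
    rw [he, abs_div, abs_of_pos hε.1, div_lt_iff₀ hε.1]
    refine this.trans_lt ?_
    rw [add_sub_cancel_left, abs_of_pos hε.1]
    nlinarith [mul_pos hη hε.1]

/-! ### The deterministic Itô formula -/

/-- Convergence of the quadratic variation sums at the times `t i / N` implies
`∫₀ᵗ g Δ² / ε ds → ∫ g d[X]` for continuous `g`. -/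
theorem tendsto_weighted_quadratic_sum {T t : ℝ} (ht : t ∈ Icc 0 T) {x q : ℝ → ℝ}
    (hx : Continuous x) (hqm : MonotoneOn q (Icc 0 T)) {μ : Measure ℝ}
    (hμ : ∀ u v : ℝ, 0 ≤ u → u ≤ v → v ≤ T → μ (Ioc u v) = ENNReal.ofReal (q v - q u))
    {ε : ℕ → ℝ} (hε : Tendsto ε atTop (𝓝[>] 0))
    (hq : ∀ N i : ℕ, i ≤ N → Tendsto
      (fun n => 1 / ε n * ∫ s in (0 : ℝ)..(t * (i / N : ℝ)), (x (s + ε n) - x s) ^ 2) atTop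
      (𝓝 (q (t * (i / N : ℝ)))))
    {g : ℝ → ℝ} (hg : ContinuousOn g (Icc 0 t)) :
    Tendsto (fun n => ∫ s in (0 : ℝ)..t, g s * (x (s + ε n) - x s) ^ 2 / ε n) atTop
      (𝓝 (∫ s in Ioc 0 t, g s ∂μ)) := by
  -- `|ε n|` makes the density nonnegative for every `n`, and equals `ε n` for large `n`
  set h : ℕ → ℝ → ℝ := fun n s => (x (s + ε n) - x s) ^ 2 / |ε n| with hh
  have hc : ∀ n, Continuous (h n) := fun n => by simp only [hh]; fun_prop
  have hnn : ∀ n s, 0 ≤ h n s := fun n s => by simp only [hh]; positivity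
  set ν : ℕ → Measure ℝ := fun n => volume.withDensity fun s => ((h n s).toNNReal : ENNReal) with hν
  have hint : ∀ n (f : ℝ → ℝ) a b,
      ∫ s in Ioc a b, f s ∂(ν n) = ∫ s in Ioc a b, h n s * f s := by
    intro n f a b
    rw [hν, setIntegral_withDensity_eq_setIntegral_smul (hc n).measurable.real_toNNReal f
      measurableSet_Ioc]
    simp [NNReal.smul_def, hnn]
  have hνfin : ∀ n, ν n (Ioc 0 t) < ⊤ := by
    intro n
    have : IntegrableOn (h n) (Ioc 0 t) := (hc n).integrableOn_Ioc
    rw [hν, withDensity_apply _ measurableSet_Ioc]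
    exact this.lintegral_lt_top
  have hreal : ∀ n a b, a ≤ b → (ν n).real (Ioc a b) = ∫ s in a..b, h n s := by
    intro n a b hab
    have := hint n (fun _ => 1) a b
    simp only [mul_one] at this
    rw [intervalIntegral.integral_of_le hab, ← this]
    simp
  have hpos : ∀ᶠ n in atTop, 0 < ε n := hε.eventually eventually_mem_nhdsWithin
  have hle : ∀ N i : ℕ, i ≤ N → t * (i / N : ℝ) ∈ Icc 0 t := by
    intro N i hi
    refine ⟨mul_nonneg ht.1 (by positivity), mul_le_of_le_one_right ht.1 ?_⟩
    exact div_le_one_of_le₀ (by exact_mod_cast hi) (by positivity)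
  have key := tendsto_integral_of_tendsto_measure_Ioc (ν := ν) (μ := μ) ht.1 hg hνfin
    (by rw [hμ 0 t le_rfl ht.1 ht.2]; exact ENNReal.ofReal_lt_top) ?_
  · refine key.congr' ?_
    filter_upwards [hpos] with n hn
    rw [hint, intervalIntegral.integral_of_le ht.1]
    refine integral_congr_ae (Eventually.of_forall fun s => ?_)
    simp only [hh, abs_of_pos hn]
    ring
  · intro N i hi
    have hi0 := hle N i hi.le
    have hi1 := hle N (i + 1) hi
    have hii : t * (i / N : ℝ) ≤ t * ((i + 1 : ℕ) / N : ℝ) := by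
      refine mul_le_mul_of_nonneg_left ?_ ht.1
      gcongr
      simp
    have hmon : q (t * (i / N : ℝ)) ≤ q (t * ((i + 1 : ℕ) / N : ℝ)) :=
      hqm ⟨hi0.1, hi0.2.trans ht.2⟩ ⟨hi1.1, hi1.2.trans ht.2⟩ hii
    rw [Measure.real, hμ _ _ hi0.1 hii (hi1.2.trans ht.2), ENNReal.toReal_ofReal (by linarith)]
    refine ((hq N (i + 1) hi).sub (hq N i hi.le)).congr' ?_
    filter_upwards [hpos] with n hn
    rw [hreal n _ _ hii, ← mul_sub, intervalIntegral.integral_interval_sub_left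
      ((by fun_prop : Continuous fun s => (x (s + ε n) - x s) ^ 2).intervalIntegrable _ _)
      ((by fun_prop : Continuous fun s => (x (s + ε n) - x s) ^ 2).intervalIntegrable _ _)]
    simp only [hh, abs_of_pos hn, intervalIntegral.integral_div]
    ring

/-- The second-order Taylor remainder in space is `o(Δ²)` uniformly in `s ∈ [0, T]`, by uniform
continuity of the path and of `∂²ₓₓF` on a compact set containing the path. -/
theorem taylor_remainder_uniform {T : ℝ} {x : ℝ → ℝ} (hx : Continuous x)
    {F Fx Fxx : ℝ → ℝ → ℝ}
    (hFx : ∀ s ∈ Icc 0 T, ∀ y : ℝ, HasDerivAt (fun y => F s y) (Fx s y) y)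
    (hFxx : ∀ s ∈ Icc 0 T, ∀ y : ℝ, HasDerivAt (fun y => Fx s y) (Fxx s y) y)
    (hFxxc : ContinuousOn (fun p : ℝ × ℝ => Fxx p.1 p.2) (Icc 0 T ×ˢ univ))
    {η : ℝ} (hη : 0 < η) :
    ∀ᶠ ε : ℝ in 𝓝[>] 0, ∀ s ∈ Icc 0 T,
      |F s (x (s + ε)) - F s (x s) - Fx s (x s) * (x (s + ε) - x s)
        - 1 / 2 * (Fxx s (x s) * (x (s + ε) - x s) ^ 2)| ≤ η * (x (s + ε) - x s) ^ 2 := by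
  obtain ⟨M, hM⟩ := isCompact_Icc.exists_bound_of_continuousOn
    (s := Icc 0 (T + 1)) hx.continuousOn
  obtain ⟨ρ, hρ, hρ'⟩ := Metric.uniformContinuousOn_iff.1
    ((isCompact_Icc.prod isCompact_Icc).uniformContinuousOn_of_continuous
      (s := Icc 0 T ×ˢ Icc (-M) M) (hFxxc.mono (prod_mono_right (subset_univ _)))) η hη
  obtain ⟨τ, hτ, hτ'⟩ := Metric.uniformContinuousOn_iff.1
    (isCompact_Icc.uniformContinuousOn_of_continuous (s := Icc 0 (T + 1)) hx.continuousOn) ρ hρ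
  filter_upwards [eventually_mem_nhdsWithin, mem_nhdsWithin_of_mem_nhds (Iio_mem_nhds one_pos),
    mem_nhdsWithin_of_mem_nhds (Iio_mem_nhds hτ)] with ε hε hε1 hετ s hs
  simp only [mem_Ioi, mem_Iio] at hε hε1 hετ
  have hs0 : s ∈ Icc 0 (T + 1) := ⟨hs.1, by linarith [hs.2]⟩
  have hs1 : s + ε ∈ Icc 0 (T + 1) := ⟨by linarith [hs.1], by linarith [hs.2]⟩
  have hd : |x (s + ε) - x s| < ρ := by
    rw [← Real.dist_eq]
    refine hτ' _ hs1 _ hs0 ?_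
    rwa [Real.dist_eq, add_sub_cancel_left, abs_of_pos hε]
  refine abs_taylor_two_le (hFx s hs) (hFxx s hs) fun z hz => ?_
  have hx0 : x s ∈ Icc (-M) M := abs_le.1 (hM s hs0)
  have hx1 : x (s + ε) ∈ Icc (-M) M := abs_le.1 (hM _ hs1)
  have hzM : z ∈ Icc (-M) M := by
    have := ordConnected_Icc.uIcc_subset hx0 hx1
    exact this hz
  refine (hρ' (s, z) ⟨hs, hzM⟩ (s, x s) ⟨hs, hx0⟩ ?_).le
  rw [Prod.dist_eq]
  simp only [dist_self]
  refine max_lt hρ ?_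
  rw [Real.dist_eq]
  exact (abs_sub_left_of_mem_uIcc hz).trans_lt hd

/-- Itô's formula for one path `x` with quadratic variation `q` along a fixed sequence `ε n → 0⁺`,
where `μ` is the Stieltjes measure of `q` on `[0, T]`. -/
theorem pathwise_ito {T t : ℝ} (ht : t ∈ Icc 0 T) {x q : ℝ → ℝ}
    (hx : Continuous x) (hqm : MonotoneOn q (Icc 0 T)) {μ : Measure ℝ}
    (hμ : ∀ u v : ℝ, 0 ≤ u → u ≤ v → v ≤ T → μ (Ioc u v) = ENNReal.ofReal (q v - q u))
    {ε : ℕ → ℝ} (hε : Tendsto ε atTop (𝓝[>] 0))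
    (hq : ∀ N i : ℕ, i ≤ N → Tendsto
      (fun n => 1 / ε n * ∫ s in (0 : ℝ)..(t * (i / N : ℝ)), (x (s + ε n) - x s) ^ 2) atTop
      (𝓝 (q (t * (i / N : ℝ)))))
    {F Ft Fx Fxx : ℝ → ℝ → ℝ}
    (hF : ContinuousOn (fun p : ℝ × ℝ => F p.1 p.2) (Icc 0 T ×ˢ univ))
    (hFt : ∀ y : ℝ, ∀ r ∈ Icc 0 T, HasDerivWithinAt (fun r => F r y) (Ft r y) (Icc 0 T) r)
    (hFx : ∀ s ∈ Icc 0 T, ∀ y : ℝ, HasDerivAt (fun y => F s y) (Fx s y) y)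
    (hFxx : ∀ s ∈ Icc 0 T, ∀ y : ℝ, HasDerivAt (fun y => Fx s y) (Fxx s y) y)
    (hFtc : ContinuousOn (fun p : ℝ × ℝ => Ft p.1 p.2) (Icc 0 T ×ˢ univ))
    (hFxc : ContinuousOn (fun p : ℝ × ℝ => Fx p.1 p.2) (Icc 0 T ×ˢ univ))
    (hFxxc : ContinuousOn (fun p : ℝ × ℝ => Fxx p.1 p.2) (Icc 0 T ×ˢ univ)) :
    Tendsto (fun n => ∫ s in (0 : ℝ)..t, Fx s (x s) * (x (s + ε n) - x s) / ε n) atTop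
      (𝓝 (F t (x t) - F 0 (x 0) - (∫ s in (0 : ℝ)..t, Ft s (x s))
        - 1 / 2 * ∫ s in Ioc 0 t, Fxx s (x s) ∂μ)) := by
  have hT : 0 ≤ T := ht.1.trans ht.2
  have hpos : ∀ᶠ n in atTop, 0 < ε n := hε.eventually eventually_mem_nhdsWithin
  have hclamp : ∀ r : ℝ, max 0 (min T r) ∈ Icc 0 T := fun r =>
    ⟨le_max_left _ _, max_le hT (min_le_left _ _)⟩
  have hclamp_eq : ∀ r ∈ Icc 0 T, max 0 (min T r) = r := fun r hr => by
    rw [min_eq_right hr.2, max_eq_right hr.1]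
  have hsub : Icc 0 t ⊆ Icc 0 T := Icc_subset_Icc_right ht.2
  -- `F` along the path, extended continuously to all times
  set G : ℝ → ℝ := fun r => F (max 0 (min T r)) (x r) with hG
  have hGc : Continuous G := by
    rw [← continuousOn_univ]
    exact continuousOn_comp_path hF (by fun_prop) hx.continuousOn fun s _ => hclamp s
  set R : ℝ → ℝ → ℝ := fun e s => F s (x (s + e)) - F s (x s) - Fx s (x s) * (x (s + e) - x s)
        - 1 / 2 * (Fxx s (x s) * (x (s + e) - x s) ^ 2) with hR
  have hcF : ∀ e : ℝ, ContinuousOn (fun s => F s (x (s + e))) (Icc 0 t) := fun e =>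
    continuousOn_comp_path hF (by fun_prop) (by fun_prop) fun s hs => hsub hs
  have hcF0 : ContinuousOn (fun s => F s (x s)) (Icc 0 t) := by simpa using hcF 0
  have hcFx : ContinuousOn (fun s => Fx s (x s)) (Icc 0 t) :=
    continuousOn_comp_path hFxc (by fun_prop) (by fun_prop) fun s hs => hsub hs
  have hcFxx : ContinuousOn (fun s => Fxx s (x s)) (Icc 0 t) :=
    continuousOn_comp_path hFxxc (by fun_prop) (by fun_prop) fun s hs => hsub hs
  have hcΔ : ∀ e : ℝ, ContinuousOn (fun s => x (s + e) - x s) (Icc 0 t) := fun e => by fun_prop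
  have hcR : ∀ e : ℝ, ContinuousOn (R e) (Icc 0 t) := fun e =>
    (((hcF e).sub hcF0).sub (hcFx.mul (hcΔ e))).sub
      ((hcFxx.mul ((hcΔ e).pow 2)).const_mul (1 / 2) )
  have hii : ∀ f : ℝ → ℝ, ContinuousOn f (Icc 0 t) → IntervalIntegrable f volume 0 t :=
    fun f hf => ContinuousOn.intervalIntegrable (by rwa [uIcc_of_le ht.1])
  have hqv : ∀ g : ℝ → ℝ, ContinuousOn g (Icc 0 t) →
      Tendsto (fun n => ∫ s in (0 : ℝ)..t, g s * (x (s + ε n) - x s) ^ 2 / ε n) atTop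
      (𝓝 (∫ s in Ioc 0 t, g s ∂μ)) := fun g hg =>
    tendsto_weighted_quadratic_sum ht hx hqm hμ hε hq hg
  have hRlim : Tendsto (fun n => ∫ s in (0 : ℝ)..t, R (ε n) s / ε n) atTop (𝓝 0) := by
    have hmass := hqv (fun _ => 1) continuousOn_const
    set m := ∫ s in Ioc 0 t, (1 : ℝ) ∂μ with hm
    have hm0 : 0 ≤ m := integral_nonneg fun _ => zero_le_one
    rw [Metric.tendsto_nhds]
    intro δ hδ
    have hη : 0 < δ / (m + 1) := by positivity
    filter_upwards [hpos, hε.eventually (taylor_remainder_uniform hx hFx hFxx hFxxc hη),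
      hmass.eventually (gt_mem_nhds (lt_add_one m))] with n hn hn1 hn2
    rw [dist_zero_right]
    refine (intervalIntegral.norm_integral_le_of_norm_le (g := fun s =>
      δ / (m + 1) * (1 * (x (s + ε n) - x s) ^ 2 / ε n)) ht.1 ?_ ?_).trans_lt ?_
    · refine Eventually.of_forall fun s hs => ?_
      rw [Real.norm_eq_abs, abs_div, abs_of_pos hn, div_le_iff₀ hn]
      refine (hn1 s (hsub ⟨hs.1.le, hs.2⟩)).trans (le_of_eq ?_)
      field_simp
    · exact (by fun_prop : Continuous _).intervalIntegrable _ _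
    · rw [intervalIntegral.integral_const_mul]
      calc _ < δ / (m + 1) * (m + 1) := by gcongr
        _ = δ := by field_simp
  have hlim := (((tendsto_average_increment hGc t).comp hε).sub
    ((tendsto_time_increment ht hx hF hFt hFtc).comp hε)).sub
    ((hqv _ hcFxx).const_mul (1 / 2)) |>.sub hRlim
  rw [sub_zero] at hlim
  simp only [hG] at hlim
  rw [hclamp_eq t ht, hclamp_eq 0 ⟨le_rfl, hT⟩] at hlim
  refine hlim.congr fun n => ?_
  simp only [Function.comp]
  have i1 : IntervalIntegrable (fun s => (G (s + ε n) - G s) / ε n) volume 0 t :=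
    (by fun_prop : Continuous _).intervalIntegrable _ _
  have i2 : IntervalIntegrable (fun s => (F (max 0 (min T (s + ε n))) (x (s + ε n))
      - F s (x (s + ε n))) / ε n) volume 0 t := by
    refine hii _ (ContinuousOn.div_const (ContinuousOn.sub ?_ (hcF _)) _)
    exact (by fun_prop : Continuous fun s => G (s + ε n)).continuousOn
  have i3 : IntervalIntegrable (fun s => Fxx s (x s) * (x (s + ε n) - x s) ^ 2 / ε n)
      volume 0 t := hii _ ((hcFxx.mul ((hcΔ _).pow 2)).div_const _)
  have i4 : IntervalIntegrable (fun s => R (ε n) s / ε n) volume 0 t :=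
    hii _ ((hcR _).div_const _)
  rw [← intervalIntegral.integral_const_mul, ← intervalIntegral.integral_sub i1 i2,
    ← intervalIntegral.integral_sub (i1.sub i2) (i3.const_mul _),
    ← intervalIntegral.integral_sub ((i1.sub i2).sub (i3.const_mul _)) i4]
  refine intervalIntegral.integral_congr fun s hs => ?_
  rw [uIcc_of_le ht.1] at hs
  simp only [hR, hG, hclamp_eq s (hsub hs)]
  ring

/-! ### Measurability and continuity -/

/-- The regularized integrals are random variables. Continuity of the paths makes `X` jointly
measurable, and `H` is evaluated at a clamped time so as to be continuous on the whole plane. -/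
theorem aestronglyMeasurable_forward_sum {Ω : Type*} [MeasurableSpace Ω] (P : Measure Ω)
    {T t : ℝ} (ht : t ∈ Icc 0 T) {X : ℝ → Ω → ℝ} (hXm : ∀ t, Measurable (X t))
    (hXc : ∀ ω, Continuous fun t => X t ω) {H : ℝ → ℝ → ℝ}
    (hH : ContinuousOn (fun p : ℝ × ℝ => H p.1 p.2) (Icc 0 T ×ˢ univ)) (ε : ℝ) :
    AEStronglyMeasurable
      (fun ω => ∫ s in (0 : ℝ)..t, H s (X s ω) * (X (s + ε) ω - X s ω) / ε) P := by
  have hT : 0 ≤ T := ht.1.trans ht.2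
  have hcl : Continuous fun p : ℝ × ℝ => H (max 0 (min T p.1)) p.2 := by
    rw [← continuousOn_univ]
    exact hH.comp (f := fun p : ℝ × ℝ => (max 0 (min T p.1), p.2)) (by fun_prop) fun p _ =>
      ⟨⟨le_max_left _ _, max_le hT (min_le_left _ _)⟩, mem_univ _⟩
  have hXu : Measurable fun p : Ω × ℝ => X p.2 p.1 :=
    (measurable_uncurry_of_continuous_of_measurable (u := X) hXc hXm).comp measurable_swap
  have hXe : Measurable fun p : Ω × ℝ => X (p.2 + ε) p.1 :=
    hXu.comp (measurable_fst.prodMk (measurable_snd.add_const ε))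
  have hm : Measurable fun p : Ω × ℝ =>
      H (max 0 (min T p.2)) (X p.2 p.1) * (X (p.2 + ε) p.1 - X p.2 p.1) / ε :=
    ((hcl.measurable.comp (measurable_snd.prodMk hXu)).mul (hXe.sub hXu)).div_const ε
  have := (hm.stronglyMeasurable.integral_prod_right' (ν := volume.restrict (Ioc 0 t)))
  refine this.aestronglyMeasurable.congr (Eventually.of_forall fun ω => ?_)
  simp only
  rw [intervalIntegral.integral_of_le ht.1]
  refine setIntegral_congr_fun measurableSet_Ioc fun s hs => ?_
  rw [min_eq_right (hs.2.trans ht.2), max_eq_right hs.1.le]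

theorem continuousOn_stieltjes_integral {T : ℝ} {q g : ℝ → ℝ}
    (hqm : MonotoneOn q (Icc 0 T)) (hqc : ContinuousOn q (Icc 0 T)) {μ : Measure ℝ}
    (hμ : ∀ u v : ℝ, 0 ≤ u → u ≤ v → v ≤ T → μ (Ioc u v) = ENNReal.ofReal (q v - q u))
    (hg : ContinuousOn g (Icc 0 T)) :
    ContinuousOn (fun t => ∫ s in Ioc 0 t, g s ∂μ) (Icc 0 T) := by
  obtain ⟨C, hC⟩ := isCompact_Icc.exists_bound_of_continuousOn hg
  have hinc : ∀ u ∈ Icc 0 T, ∀ v ∈ Icc 0 T, u ≤ v →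
      |(∫ s in Ioc 0 v, g s ∂μ) - ∫ s in Ioc 0 u, g s ∂μ| ≤ C * |q v - q u| := by
    intro u hu v hv huv
    have hfin : ∀ a b, 0 ≤ a → a ≤ b → b ≤ T → μ (Ioc a b) < ⊤ := fun a b h1 h2 h3 => by
      rw [hμ a b h1 h2 h3]; exact ENNReal.ofReal_lt_top
    have hi : ∀ a b, 0 ≤ a → a ≤ b → b ≤ T → IntegrableOn g (Ioc a b) μ := by
      intro a b h1 h2 h3
      have hsub : Ioc a b ⊆ Icc 0 T := fun s hs => ⟨h1.trans hs.1.le, hs.2.trans h3⟩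
      refine IntegrableOn.of_bound (hfin a b h1 h2 h3)
        ((hg.mono hsub).aestronglyMeasurable measurableSet_Ioc) C ?_
      filter_upwards [ae_restrict_mem measurableSet_Ioc] with s hs
      exact hC s (hsub hs)
    have huni := setIntegral_union (μ := μ) (f := g) (Ioc_disjoint_Ioc_of_le (le_refl u))
      measurableSet_Ioc (hi 0 u le_rfl hu.1 hu.2) (hi u v hu.1 huv hv.2)
    rw [Ioc_union_Ioc_eq_Ioc hu.1 huv] at huni
    rw [huni, add_sub_cancel_left, abs_of_nonneg (sub_nonneg.2 (hqm hu hv huv))]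
    have hreal : μ.real (Ioc u v) = q v - q u := by
      rw [Measure.real, hμ u v hu.1 huv hv.2,
        ENNReal.toReal_ofReal (sub_nonneg.2 (hqm hu hv huv))]
    rw [← hreal, ← Real.norm_eq_abs]
    exact norm_setIntegral_le_of_norm_le_const (hfin u v hu.1 huv hv.2)
      fun s hs => hC s ⟨hu.1.trans hs.1.le, hs.2.trans hv.2⟩
  intro u hu
  have hlim : Tendsto (fun v => C * |q v - q u|) (𝓝[Icc 0 T] u) (𝓝 0) := by
    have h1 : ContinuousWithinAt (fun v => C * |q v - q u|) (Icc 0 T) u :=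
      continuousWithinAt_const.mul ((hqc u hu).sub continuousWithinAt_const).abs
    simpa [ContinuousWithinAt] using h1
  rw [ContinuousWithinAt, tendsto_iff_dist_tendsto_zero]
  refine squeeze_zero' (Eventually.of_forall fun _ => dist_nonneg) ?_ hlim
  filter_upwards [eventually_mem_nhdsWithin] with v hv
  rw [Real.dist_eq]
  rcases le_total u v with h | h
  · exact hinc u hu v hv h
  · rw [abs_sub_comm, abs_sub_comm (q v)]
    exact hinc v hv u hu h

/-! ### The Itô formula -/

/-- **Itô formula of stochastic calculus via regularizations for finite quadratic
variation processes.**  Let `X` be a real-valued measurable process with continuous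
paths on a probability space `(Ω, ℱ, P)`, extended by `X_t = X_0` for `t < 0` and
`X_t = X_T` for `t > T`, with finite quadratic variation `[X] = QV` (paths continuous,
nondecreasing, vanishing at `0`, and `(1/ε)∫_0^t (X_{s+ε}-X_s)² ds → QV_t` in
probability for each `t ∈ [0,T]`); `μqv ω` is the pathwise Lebesgue–Stieltjes measure
of `QV · ω` on `[0,T]`.  Let `F ∈ C^{1,2}([0,T] × ℝ; ℝ)` with `∂_t F = Ft`,
`∂_x F = Fx`, `∂²_{xx} F = Fxx`.  Then for every `t ∈ [0,T]`,
`∫_0^t Fx(s,X_s)(X_{s+ε}-X_s)/ε ds` converges in probability, as `ε → 0⁺`, to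
`F(t,X_t) - F(0,X_0) - ∫_0^t Ft(s,X_s) ds - (1/2)∫_{]0,t]} Fxx(s,X_s) d[X]_s`.
Consequently, for any continuous version `A` of the forward integral process
`∫_0^· Fx(s,X_s) d⁻X_s`, one has `P`-a.s.:
`F(t,X_t) = F(0,X_0) + ∫_0^t Ft(s,X_s) ds + A_t + (1/2)∫_{]0,t]} Fxx(s,X_s) d[X]_s`
for all `t ∈ [0,T]`. -/
theorem ito_formula_via_regularization
    (Ω : Type*) [MeasurableSpace Ω] (P : Measure Ω) [IsProbabilityMeasure P]
    (T : ℝ) (hT : 0 < T)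
    (X : ℝ → Ω → ℝ)
    (hX_meas : ∀ t : ℝ, Measurable (X t))
    (hX_cont : ∀ ω, Continuous fun t => X t ω)
    (hX_ext0 : ∀ ω, ∀ t < (0 : ℝ), X t ω = X 0 ω)
    (hX_extT : ∀ ω, ∀ t > T, X t ω = X T ω)
    (QV : ℝ → Ω → ℝ)
    (hQV_mono : ∀ ω, MonotoneOn (fun t => QV t ω) (Set.Icc 0 T))
    (hQV_cont : ∀ ω, ContinuousOn (fun t => QV t ω) (Set.Icc 0 T))
    (hQV_zero : ∀ ω, QV 0 ω = 0)
    (hQV_lim : ∀ t ∈ Set.Icc (0 : ℝ) T,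
      TendstoInMeasure P
        (fun (ε : ℝ) ω => (1 / ε) * ∫ s in (0 : ℝ)..t, (X (s + ε) ω - X s ω) ^ 2)
        (𝓝[>] 0) (fun ω => QV t ω))
    (μqv : Ω → Measure ℝ)
    (hμqv : ∀ ω, ∀ u v : ℝ, 0 ≤ u → u ≤ v → v ≤ T →
      μqv ω (Set.Ioc u v) = ENNReal.ofReal (QV v ω - QV u ω))
    (F Ft Fx Fxx : ℝ → ℝ → ℝ)
    (hF_cont : ContinuousOn (fun p : ℝ × ℝ => F p.1 p.2) (Set.Icc 0 T ×ˢ Set.univ))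
    (hFt : ∀ x : ℝ, ∀ t ∈ Set.Icc (0 : ℝ) T,
      HasDerivWithinAt (fun r => F r x) (Ft t x) (Set.Icc 0 T) t)
    (hFx : ∀ t ∈ Set.Icc (0 : ℝ) T, ∀ x : ℝ, HasDerivAt (fun y => F t y) (Fx t x) x)
    (hFxx : ∀ t ∈ Set.Icc (0 : ℝ) T, ∀ x : ℝ, HasDerivAt (fun y => Fx t y) (Fxx t x) x)
    (hFt_cont : ContinuousOn (fun p : ℝ × ℝ => Ft p.1 p.2) (Set.Icc 0 T ×ˢ Set.univ))
    (hFx_cont : ContinuousOn (fun p : ℝ × ℝ => Fx p.1 p.2) (Set.Icc 0 T ×ˢ Set.univ))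
    (hFxx_cont : ContinuousOn (fun p : ℝ × ℝ => Fxx p.1 p.2)
      (Set.Icc 0 T ×ˢ Set.univ)) :
    (∀ t ∈ Set.Icc (0 : ℝ) T,
      TendstoInMeasure P
        (fun (ε : ℝ) ω => ∫ s in (0 : ℝ)..t, Fx s (X s ω) * (X (s + ε) ω - X s ω) / ε)
        (𝓝[>] 0)
        (fun ω => F t (X t ω) - F 0 (X 0 ω) - (∫ s in (0 : ℝ)..t, Ft s (X s ω))
            - (1 / 2) * ∫ s in Set.Ioc (0 : ℝ) t, Fxx s (X s ω) ∂(μqv ω)))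
    ∧ ∀ A : ℝ → Ω → ℝ,
        (∀ ω, ContinuousOn (fun t => A t ω) (Set.Icc 0 T)) →
        (∀ t ∈ Set.Icc (0 : ℝ) T,
          TendstoInMeasure P
            (fun (ε : ℝ) ω =>
              ∫ s in (0 : ℝ)..t, Fx s (X s ω) * (X (s + ε) ω - X s ω) / ε)
            (𝓝[>] 0) (fun ω => A t ω)) →
        ∀ᵐ ω ∂P, ∀ t ∈ Set.Icc (0 : ℝ) T,
          F t (X t ω) = F 0 (X 0 ω) + (∫ s in (0 : ℝ)..t, Ft s (X s ω)) + A t ω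
            + (1 / 2) * ∫ s in Set.Ioc (0 : ℝ) t, Fxx s (X s ω) ∂(μqv ω) := by
  have hmain : ∀ t ∈ Set.Icc (0 : ℝ) T,
      TendstoInMeasure P
        (fun (ε : ℝ) ω => ∫ s in (0 : ℝ)..t, Fx s (X s ω) * (X (s + ε) ω - X s ω) / ε)
        (𝓝[>] 0)
        (fun ω => F t (X t ω) - F 0 (X 0 ω) - (∫ s in (0 : ℝ)..t, Ft s (X s ω))
            - (1 / 2) * ∫ s in Set.Ioc (0 : ℝ) t, Fxx s (X s ω) ∂(μqv ω)) := by
    intro t ht δ hδ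
    refine tendsto_of_subseq_tendsto fun ns hns => ?_
    -- the countable family of all points `t * (i / N)`, `i ≤ N`, listed through `Nat.unpair`
    set τ : ℕ → ℝ := fun j => t * min 1 ((j.unpair.2 : ℝ) / (j.unpair.1 : ℝ)) with hτ
    have hτmem : ∀ j, τ j ∈ Icc 0 T := fun j =>
      ⟨mul_nonneg ht.1 (le_min zero_le_one (by positivity)),
        (mul_le_of_le_one_right ht.1 (min_le_left _ _)).trans ht.2⟩
    obtain ⟨φ, hφ, hφae⟩ := exists_common_subseq_tendsto_ae
      (fun j => (hQV_lim (τ j) (hτmem j)).comp hns)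
    refine ⟨φ, ?_⟩
    have hε : Tendsto (fun n => ns (φ n)) atTop (𝓝[>] 0) := hns.comp hφ.tendsto_atTop
    refine tendstoInMeasure_of_tendsto_ae
      (fun n => aestronglyMeasurable_forward_sum P ht hX_meas hX_cont hFx_cont (ns (φ n))) ?_ δ hδ
    filter_upwards [hφae] with ω hω
    refine pathwise_ito ht (hX_cont ω) (hQV_mono ω) (hμqv ω) hε (fun N i hi => ?_)
      hF_cont hFt hFx hFxx hFt_cont hFx_cont hFxx_cont
    have := hω (Nat.pair N i)
    simp only [hτ, Nat.unpair_pair, Function.comp] at this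
    rwa [min_eq_right (div_le_one_of_le₀ (by exact_mod_cast hi) (by positivity))] at this
  refine ⟨hmain, fun A hA hAlim => ?_⟩
  obtain ⟨D, hDc, hDd⟩ := TopologicalSpace.exists_countable_dense (Icc (0 : ℝ) T)
  have hDae : ∀ᵐ ω ∂P, ∀ d ∈ D, A d ω =
      F d (X d ω) - F 0 (X 0 ω) - (∫ s in (0 : ℝ)..d, Ft s (X s ω))
            - (1 / 2) * ∫ s in Set.Ioc (0 : ℝ) d, Fxx s (X s ω) ∂(μqv ω) :=
    (ae_ball_iff hDc).2 fun d _ => tendstoInMeasure_ae_unique (hAlim d d.2) (hmain d d.2)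
  filter_upwards [hDae] with ω hω t ht
  have hX := (hX_cont ω).continuousOn (s := Icc 0 T)
  have hcT : ContinuousOn (fun r => ∫ s in (0 : ℝ)..r, Ft s (X s ω)) (Icc 0 T) := by
    have := intervalIntegral.continuousOn_primitive_interval (μ := volume) (a := 0) (b := T)
      (f := fun s => Ft s (X s ω)) (by
        rw [uIcc_of_le hT.le]
        exact (continuousOn_comp_path hFt_cont continuousOn_id hX fun s hs => hs).integrableOn_Icc)
    rwa [uIcc_of_le hT.le] at this
  have hcR : ContinuousOn (fun r => F r (X r ω) - F 0 (X 0 ω)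
      - (∫ s in (0 : ℝ)..r, Ft s (X s ω))
      - (1 / 2) * ∫ s in Set.Ioc (0 : ℝ) r, Fxx s (X s ω) ∂(μqv ω)) (Icc 0 T) :=
    (((continuousOn_comp_path hF_cont continuousOn_id hX fun s hs => hs).sub
      continuousOn_const).sub hcT).sub
      ((continuousOn_stieltjes_integral (hQV_mono ω) (hQV_cont ω) (hμqv ω)
        (continuousOn_comp_path hFxx_cont continuousOn_id hX fun s hs => hs)).const_mul (1 / 2))
  have heq := Continuous.ext_on hDd (continuousOn_iff_continuous_domRestrict.1 (hA ω))
    (continuousOn_iff_continuous_domRestrict.1 hcR) (fun d hd => hω d hd)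
  have := congrFun heq ⟨t, ht⟩
  simp only [domRestrict_apply] at this
  linarith
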